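/- Let N ≥ 1, σ ∈ (0,2), h > 0 and let φ : ℝ^N → ℝ be bounded and measurable. Then for every x ∈ ℝ^N the integral defining (-(-Δ_h)^{σ/2}φ)(x) converges absolutely, the series ∑_{j ∈ ℤ^N \ {0}} (φ(x + hj) − φ(x))·κ_{σ,h,j} converges absolutely, and (-(-Δ_h)^{σ/2}φ)(x) = ∑_{j ∈ ℤ^N \ {0}} (φ(x + hj) − φ(x))·κ_{σ,h,j}. -/

import Mathlib

/-! The proof is an exchange of sum and integral. For fixed `t ≥ 0` the heat kernel `G N · t` is a
probability distribution on `ℤ^N` (`hasSum_G`): in dimension one the double series for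
`e^t · e^t` is regrouped along the diagonals `a - b = m` of `ℕ × ℕ`, which gives
`∑_{m ∈ ℤ} I_{|m|}(2t) = e^{2t}`, and the general case is a product. Since `I_0 ≥ 1`, the mass away
from the origin is at most `1 - e^{-2Nt} ≤ min (1, 2Nt)`, and this makes
`∑_{j ≠ 0} G(j,t) t^{-1-σ/2}` integrable on `(0,∞)`: the linear bound handles `t → 0` (as `σ < 2`)
and the constant bound handles `t → ∞` (as `σ > 0`). Because of total mass one,
`(e^{tΔ_h}φ)(x) - φ(x) = ∑_{j ≠ 0} G(j,t/h²) (φ(x+hj) - φ(x))`, and as `φ` is bounded this series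
may be integrated term by term. The substitution `t = h² s` turns the `j`-th integral into
`h^{-σ} ∫ G(j,s) s^{-1-σ/2} ds`. -/

open MeasureTheory Real Set

/-- Modified Bessel function of the first kind of integer order `m`. -/
noncomputable def besselI (m : ℕ) (s : ℝ) : ℝ :=
  ∑' k : ℕ, (s / 2) ^ (2 * k + m) / ((Nat.factorial k : ℝ) * (Nat.factorial (k + m)))

/-- `G(j,t) = e^{-2Nt} ∏_i I_{|j_i|}(2t)`. -/
noncomputable def G (N : ℕ) (j : Fin N → ℤ) (t : ℝ) : ℝ :=
  Real.exp (-(2 * (N : ℝ)) * t) * ∏ i, besselI (j i).natAbs (2 * t)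

/-- The weight `κ_{σ,h,j} = h^{-σ} |Γ(-σ/2)|⁻¹ ∫_0^∞ G(j,t) t^{-1-σ/2} dt`. -/
noncomputable def kappa (N : ℕ) (σ h : ℝ) (j : Fin N → ℤ) : ℝ :=
  h ^ (-σ) * |Real.Gamma (-σ / 2)|⁻¹ * ∫ t in Set.Ioi (0 : ℝ), G N j t * t ^ (-1 - σ / 2)

/-- The shifted grid point `x + h j`. -/
noncomputable def shift (N : ℕ) (h : ℝ) (x : Fin N → ℝ) (j : Fin N → ℤ) : Fin N → ℝ :=
  fun i => x i + h * (j i : ℝ)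

/-- The semi-discrete heat semigroup `(e^{tΔ_h}φ)(x) = ∑_{j∈ℤ^N} G(j, t/h²) φ(x + hj)`. -/
noncomputable def dheat (N : ℕ) (h : ℝ) (φ : (Fin N → ℝ) → ℝ) (t : ℝ) (x : Fin N → ℝ) : ℝ :=
  ∑' j : Fin N → ℤ, G N j (t / h ^ 2) * φ (shift N h x j)

/-! ### The modified Bessel functions -/

/-- The pairs of naturals, coordinatized by the difference `a - b` and the minimum `min a b`. -/
def diagEquiv : ℕ × ℕ ≃ ℤ × ℕ where
  toFun p := ((p.1 : ℤ) - p.2, min p.1 p.2)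
  invFun q := (q.2 + q.1.toNat, q.2 + (-q.1).toNat)
  left_inv p := by
    rcases p with ⟨a, b⟩
    ext <;> simp <;> lia
  right_inv q := by
    rcases q with ⟨m, k⟩
    ext <;> simp <;> omega

lemma besselTerm_diagEquiv (t : ℝ) (m : ℤ) (k : ℕ) :
    t ^ (diagEquiv.symm (m, k)).1 / (Nat.factorial (diagEquiv.symm (m, k)).1 : ℝ) *
      (t ^ (diagEquiv.symm (m, k)).2 / (Nat.factorial (diagEquiv.symm (m, k)).2 : ℝ)) =
    (2 * t / 2) ^ (2 * k + m.natAbs) /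
      ((Nat.factorial k : ℝ) * (Nat.factorial (k + m.natAbs))) := by
  have h2 : 2 * t / 2 = t := by ring
  rw [h2]
  simp only [diagEquiv, Equiv.coe_fn_symm_mk]
  rcases le_total 0 m with hm | hm
  · have e1 : m.toNat = m.natAbs := by omega
    have e2 : (-m).toNat = 0 := by omega
    rw [e1, e2, div_mul_div_comm, ← pow_add, add_zero, mul_comm (Nat.factorial k : ℝ)]
    congr 2
    omega
  · have e1 : m.toNat = 0 := by omega
    have e2 : (-m).toNat = m.natAbs := by omega
    rw [e1, e2, div_mul_div_comm, ← pow_add, add_zero]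
    congr 2
    omega

lemma hasSum_besselTerm (t : ℝ) (ht : 0 ≤ t) :
    HasSum (fun q : ℤ × ℕ => (2 * t / 2) ^ (2 * q.2 + q.1.natAbs) /
      ((Nat.factorial q.2 : ℝ) * (Nat.factorial (q.2 + q.1.natAbs)))) (Real.exp (2 * t)) := by
  have h1 : HasSum (fun n : ℕ => t ^ n / (Nat.factorial n : ℝ)) (Real.exp t) := by
    rw [Real.exp_eq_exp_ℝ]
    exact NormedSpace.expSeries_div_hasSum_exp t
  have h0 : (0 : ℕ → ℝ) ≤ fun n : ℕ => t ^ n / (Nat.factorial n : ℝ) := fun n => by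
    simp only [Pi.zero_apply]; positivity
  have h2 := h1.mul h1 (h1.summable.mul_of_nonneg h1.summable h0 h0)
  rw [← Real.exp_add, ← two_mul, ← diagEquiv.symm.hasSum_iff] at h2
  refine h2.congr_fun ?_
  rintro ⟨m, k⟩
  exact (besselTerm_diagEquiv t m k).symm

/-- The generating identity `∑_{m ∈ ℤ} I_{|m|}(2t) = e^{2t}`. -/
lemma hasSum_besselI (t : ℝ) (ht : 0 ≤ t) :
    HasSum (fun m : ℤ => besselI m.natAbs (2 * t)) (Real.exp (2 * t)) := by
  have h := hasSum_besselTerm t ht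
  exact h.prod_fiberwise fun m => (h.summable.prod_factor m).hasSum

lemma besselI_nonneg (m : ℕ) (t : ℝ) (ht : 0 ≤ t) : 0 ≤ besselI m (2 * t) :=
  tsum_nonneg fun k => by positivity

lemma one_le_besselI_zero (t : ℝ) (ht : 0 ≤ t) : 1 ≤ besselI 0 (2 * t) := by
  have hs := (hasSum_besselTerm t ht).summable.prod_factor 0
  have := hs.le_tsum 0 (fun k _ => by positivity)
  simpa [besselI] using this

lemma measurable_besselI (m : ℕ) : Measurable (besselI m) := by
  unfold besselI
  fun_prop

/-! ### The heat kernel -/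

lemma measurable_G (N : ℕ) (j : Fin N → ℤ) : Measurable (G N j) := by
  have := measurable_besselI
  unfold G
  fun_prop

lemma G_nonneg (N : ℕ) (j : Fin N → ℤ) (t : ℝ) (ht : 0 ≤ t) : 0 ≤ G N j t :=
  mul_nonneg (Real.exp_nonneg _) (Finset.prod_nonneg fun _ _ => besselI_nonneg _ t ht)

lemma hasSum_prod_pi {f : ℤ → ℝ} {a : ℝ} (hf : HasSum f a) (h0 : ∀ m, 0 ≤ f m) (N : ℕ) :
    HasSum (fun j : Fin N → ℤ => ∏ i, f (j i)) (a ^ N) := by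
  induction N with
  | zero => simp
  | succ n ih =>
    have h1 : (0 : (Fin n → ℤ) → ℝ) ≤ fun j => ∏ i, f (j i) :=
      fun j => Finset.prod_nonneg fun i _ => h0 (j i)
    have hs : Summable fun p : ℤ × (Fin n → ℤ) => f p.1 * ∏ i, f (p.2 i) :=
      Summable.mul_of_nonneg (f := f) (g := fun j : Fin n → ℤ => ∏ i, f (j i))
        hf.summable ih.summable (Pi.le_def.2 h0) h1
    have h := HasSum.mul (f := f) (g := fun j : Fin n → ℤ => ∏ i, f (j i)) hf ih hs
    let e : ℤ × (Fin n → ℤ) ≃ (Fin (n + 1) → ℤ) := Fin.consEquiv fun _ => ℤ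
    rw [← e.hasSum_iff, pow_succ']
    refine h.congr_fun ?_
    rintro ⟨m, j⟩
    simp [e, Fin.prod_univ_succ]

/-- The heat kernel has total mass one. -/
lemma hasSum_G (N : ℕ) (t : ℝ) (ht : 0 ≤ t) : HasSum (fun j => G N j t) 1 := by
  have h := (hasSum_prod_pi (hasSum_besselI t ht) (fun m => besselI_nonneg _ t ht) N).mul_left
    (Real.exp (-(2 * (N : ℝ)) * t))
  have e : Real.exp (-(2 * (N : ℝ)) * t) * Real.exp (2 * t) ^ N = 1 := by
    rw [← Real.exp_nat_mul, ← Real.exp_add, Real.exp_eq_one_iff]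
    ring
  rw [e] at h
  exact h

lemma exp_le_G_zero (N : ℕ) (t : ℝ) (ht : 0 ≤ t) :
    Real.exp (-(2 * (N : ℝ)) * t) ≤ G N 0 t := by
  refine le_mul_of_one_le_right (Real.exp_nonneg _) ?_
  exact Finset.one_le_prod fun i _ => one_le_besselI_zero t ht

lemma hasSum_G_ne_zero (N : ℕ) (t : ℝ) (ht : 0 ≤ t) :
    HasSum (fun j : {j : Fin N → ℤ // j ≠ 0} => G N j.1 t) (1 - G N 0 t) := by
  have h := hasSum_ite_sub_hasSum (hasSum_G N t ht) 0
  rw [← hasSum_subtype_iff_of_support_subset (s := {j | j ≠ 0})] at h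
  · refine h.congr_fun ?_
    rintro ⟨j, hj⟩
    have hj' : j ≠ 0 := hj
    simp [hj']
  · intro j hj h0
    simp_all

/-- The mass off the origin is `O(min (1, t))`. -/
lemma sum_G_le (N : ℕ) (t : ℝ) (ht : 0 ≤ t) (s : Finset {j : Fin N → ℤ // j ≠ 0}) :
    ∑ j ∈ s, G N j.1 t ≤ min 1 (2 * N * t) := by
  have h := sum_le_hasSum s (fun j _ => G_nonneg N j.1 t ht) (hasSum_G_ne_zero N t ht)
  have h1 := exp_le_G_zero N t ht
  have h2 := Real.add_one_le_exp (-(2 * (N : ℝ)) * t)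
  have h3 := Real.exp_pos (-(2 * (N : ℝ)) * t)
  refine h.trans (le_min ?_ ?_) <;> linarith

lemma integrableOn_bound (σ : ℝ) (hσ : σ ∈ Set.Ioo (0 : ℝ) 2) (c : ℝ) (hc : 0 ≤ c) :
    IntegrableOn (fun t : ℝ => min 1 (c * t) * t ^ (-1 - σ / 2)) (Set.Ioi 0) := by
  obtain ⟨h0, h2⟩ := hσ
  rw [← Set.Ioo_union_Ici_eq_Ioi (zero_lt_one' ℝ)]
  have hm (s : Set ℝ) : AEStronglyMeasurable (fun t : ℝ => min 1 (c * t) * t ^ (-1 - σ / 2))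
      (volume.restrict s) := by
    apply Measurable.aestronglyMeasurable
    fun_prop
  refine IntegrableOn.union ?_ ?_
  · have hi : IntegrableOn (fun t : ℝ => c * t ^ (-σ / 2)) (Set.Ioo 0 1) :=
      ((intervalIntegral.integrableOn_Ioo_rpow_iff one_pos).2 (by linarith)).const_mul c
    refine hi.mono' (hm _) ?_
    filter_upwards [ae_restrict_mem measurableSet_Ioo] with t ht
    have ht0 : 0 < t := ht.1
    have e : t ^ (-σ / 2) = t * t ^ (-1 - σ / 2) := by
      rw [← Real.rpow_one_add' ht0.le (by linarith)]
      congr 1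
      ring
    rw [Real.norm_of_nonneg (by positivity), e, ← mul_assoc]
    gcongr
    exact min_le_right _ _
  · have hi : IntegrableOn (fun t : ℝ => t ^ (-1 - σ / 2)) (Set.Ici 1) :=
      (integrableOn_Ici_iff_integrableOn_Ioi).2
        (integrableOn_Ioi_rpow_of_lt (by linarith) one_pos)
    refine hi.mono' (hm _) ?_
    filter_upwards [ae_restrict_mem measurableSet_Ici] with t ht
    have ht0 : 0 < t := lt_of_lt_of_le one_pos ht
    rw [Real.norm_of_nonneg (by positivity)]
    exact mul_le_of_le_one_left (by positivity) (min_le_left _ _)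

/-- The change of variables `t = h² s`. -/
lemma integral_G_scaled (N : ℕ) (σ h : ℝ) (hh : 0 < h) (j : Fin N → ℤ) :
    ∫ t in Set.Ioi (0 : ℝ), G N j (t / h ^ 2) * t ^ (-1 - σ / 2) =
      h ^ (-σ) * ∫ t in Set.Ioi (0 : ℝ), G N j t * t ^ (-1 - σ / 2) := by
  have hp : 0 < h ^ 2 := by positivity
  have key := integral_comp_mul_left_Ioi'
    (fun t : ℝ => G N j (t / h ^ 2) * t ^ (-1 - σ / 2)) 0 hp
  rw [mul_zero] at key
  rw [← key, smul_eq_mul, ← integral_const_mul, ← integral_const_mul]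
  refine setIntegral_congr_fun measurableSet_Ioi fun t ht => ?_
  have ht0 : 0 < t := ht
  have e : h ^ (-σ) = h ^ 2 * (h ^ 2) ^ (-1 - σ / 2) := by
    rw [← Real.rpow_natCast h 2, ← Real.rpow_mul hh.le, ← Real.rpow_add hh]
    congr 1
    push_cast
    ring
  rw [mul_div_cancel_left₀ _ hp.ne', Real.mul_rpow hp.le ht0.le, e]
  ring

/-! ### Exchange of sum and integral -/

/-- for bounded measurable `φ`, the integral defining `-(-Δ_h)^{σ/2}φ(x)`
converges absolutely, the series `∑_{j≠0} (φ(x+hj) − φ(x)) κ_{σ,h,j}` converges absolutely,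
and the two quantities agree. -/
theorem stmt_4 (N : ℕ) (hN : 1 ≤ N) (σ : ℝ) (hσ : σ ∈ Set.Ioo (0 : ℝ) 2)
    (h : ℝ) (hh : 0 < h) (φ : (Fin N → ℝ) → ℝ) (hmeas : Measurable φ)
    (hbd : ∃ C : ℝ, ∀ x, |φ x| ≤ C) (x : Fin N → ℝ) :
    IntegrableOn (fun t : ℝ => (dheat N h φ t x - φ x) * t ^ (-1 - σ / 2)) (Set.Ioi 0) ∧
    Summable (fun j : {j : Fin N → ℤ // j ≠ 0} =>
      |(φ (shift N h x j.1) - φ x) * kappa N σ h j.1|) ∧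
    |Real.Gamma (-σ / 2)|⁻¹ *
        (∫ t in Set.Ioi (0 : ℝ), (dheat N h φ t x - φ x) * t ^ (-1 - σ / 2))
      = ∑' j : {j : Fin N → ℤ // j ≠ 0}, (φ (shift N h x j.1) - φ x) * kappa N σ h j.1 := by
  obtain ⟨C, hC⟩ := hbd
  have hC0 : 0 ≤ C := (abs_nonneg _).trans (hC x)
  have hp : 0 < h ^ 2 := by positivity
  set c : ℝ := 2 * N / h ^ 2 with hc
  have hc0 : 0 ≤ c := by positivity
  set B : ℝ → ℝ := fun t => min 1 (c * t) * t ^ (-1 - σ / 2) with hB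
  have hBi : IntegrableOn B (Set.Ioi 0) := integrableOn_bound σ hσ c hc0
  set d : {j : Fin N → ℤ // j ≠ 0} → ℝ := fun j => φ (shift N h x j.1) - φ x with hd
  have hd_le (j) : |d j| ≤ 2 * C := by
    have h1 := abs_sub (φ (shift N h x j.1)) (φ x)
    linarith [hC (shift N h x j.1), hC x]
  set w : {j : Fin N → ℤ // j ≠ 0} → ℝ → ℝ :=
    fun j t => G N j.1 (t / h ^ 2) * t ^ (-1 - σ / 2) with hw
  have hw0 (j) (t : ℝ) (ht : t ∈ Set.Ioi (0 : ℝ)) : 0 ≤ w j t := by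
    have ht0 : 0 < t := ht
    exact mul_nonneg (G_nonneg _ _ _ (by positivity)) (by positivity)
  have hws (s : Finset {j : Fin N → ℤ // j ≠ 0}) (t : ℝ) (ht : t ∈ Set.Ioi (0 : ℝ)) :
      ∑ j ∈ s, w j t ≤ B t := by
    have ht0 : 0 < t := ht
    simp only [hw, hB, ← Finset.sum_mul]
    have := sum_G_le N (t / h ^ 2) (by positivity) s
    rw [show 2 * (N : ℝ) * (t / h ^ 2) = c * t by rw [hc]; ring] at this
    gcongr
  have hwm (j) : Measurable (w j) := by
    have := measurable_G N j.1
    simp only [hw]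
    fun_prop
  have hwi (j) : IntegrableOn (w j) (Set.Ioi 0) := by
    refine hBi.mono' (hwm j).aestronglyMeasurable ?_
    filter_upwards [ae_restrict_mem measurableSet_Ioi] with t ht
    rw [Real.norm_of_nonneg (hw0 j t ht)]
    simpa using hws {j} t ht
  have hwint0 (j) : 0 ≤ ∫ t in Set.Ioi (0 : ℝ), w j t :=
    setIntegral_nonneg measurableSet_Ioi (hw0 j)
  have hwsum : Summable fun j => ∫ t in Set.Ioi (0 : ℝ), w j t := by
    refine summable_of_sum_le (c := ∫ t in Set.Ioi (0 : ℝ), B t) hwint0 fun s => ?_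
    rw [← integral_finsetSum s fun j _ => hwi j]
    exact setIntegral_mono_on (integrable_finsetSum s fun j _ => hwi j) hBi
      measurableSet_Ioi (hws s)
  -- total mass one lets `φ x` be absorbed into the series, where the `j = 0` term cancels
  have hpt (t : ℝ) (ht : t ∈ Set.Ioi (0 : ℝ)) :
      HasSum (fun j => d j * w j t) ((dheat N h φ t x - φ x) * t ^ (-1 - σ / 2)) := by
    have ht0 : 0 < t := ht
    have hG := hasSum_G N (t / h ^ 2) (by positivity)
    have hS : Summable fun j : Fin N → ℤ => G N j (t / h ^ 2) * φ (shift N h x j) := by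
      refine (hG.summable.mul_right C).of_norm_bounded fun j => ?_
      have hg := G_nonneg N j (t / h ^ 2) (by positivity)
      rw [norm_mul, Real.norm_of_nonneg hg]
      gcongr
      exact hC _
    have h1 := (hS.hasSum.sub (hG.mul_right (φ x))).mul_right (t ^ (-1 - σ / 2))
    rw [one_mul, ← hasSum_subtype_iff_of_support_subset (s := {j | j ≠ 0})] at h1
    · refine h1.congr_fun fun j => ?_
      simp only [hd, hw, Function.comp]
      ring
    · intro j hj h0
      apply hj
      have : shift N h x j = x := by
        subst h0
        ext i
        simp [shift]
      simp [this]
  have hkap (j : {j : Fin N → ℤ // j ≠ 0}) :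
      kappa N σ h j.1 = |Real.Gamma (-σ / 2)|⁻¹ * ∫ t in Set.Ioi (0 : ℝ), w j t := by
    simp only [hw]
    rw [integral_G_scaled N σ h hh, kappa]
    ring
  have hFi (j) : IntegrableOn (fun t => d j * w j t) (Set.Ioi 0) := (hwi j).const_mul _
  have hFsum : Summable fun j => ∫ t in Set.Ioi (0 : ℝ), ‖d j * w j t‖ := by
    refine Summable.of_nonneg_of_le (fun j => integral_nonneg fun t => norm_nonneg _)
      (fun j => ?_) (hwsum.mul_left (2 * C))
    rw [← integral_const_mul]
    refine setIntegral_mono_on (hFi j).norm ((hwi j).const_mul _) measurableSet_Ioi fun t ht => ?_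
    rw [norm_mul, Real.norm_of_nonneg (hw0 j t ht)]
    exact mul_le_mul_of_nonneg_right (hd_le j) (hw0 j t ht)
  refine ⟨?_, ?_, ?_⟩
  · refine (hBi.const_mul (2 * C)).mono' ?_ ?_
    · have hms (j : Fin N → ℤ) := measurable_G N j
      apply Measurable.aestronglyMeasurable
      unfold dheat
      fun_prop
    · filter_upwards [ae_restrict_mem measurableSet_Ioi] with t ht
      have hle : ∀ s : Finset {j : Fin N → ℤ // j ≠ 0}, ‖∑ j ∈ s, d j * w j t‖ ≤ 2 * C * B t := by
        intro s
        calc ‖∑ j ∈ s, d j * w j t‖ ≤ ∑ j ∈ s, 2 * C * w j t := by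
              refine norm_sum_le_of_le s fun j _ => ?_
              rw [norm_mul, Real.norm_of_nonneg (hw0 j t ht)]
              exact mul_le_mul_of_nonneg_right (hd_le j) (hw0 j t ht)
          _ = 2 * C * ∑ j ∈ s, w j t := by rw [Finset.mul_sum]
          _ ≤ 2 * C * B t := mul_le_mul_of_nonneg_left (hws s t ht) (by positivity)
      exact le_of_tendsto ((hpt t ht).norm) (Filter.Eventually.of_forall hle)
  · refine Summable.of_nonneg_of_le (fun j => abs_nonneg _) (fun j => ?_)
      (hwsum.mul_left (2 * C * |Real.Gamma (-σ / 2)|⁻¹))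
    rw [abs_mul, hkap j, abs_of_nonneg (mul_nonneg (by positivity) (hwint0 j)), mul_assoc]
    exact mul_le_mul_of_nonneg_right (hd_le j) (mul_nonneg (by positivity) (hwint0 j))
  · have hmain := (hasSum_integral_of_summable_integral_norm hFi hFsum).mul_left
      |Real.Gamma (-σ / 2)|⁻¹
    rw [setIntegral_congr_fun measurableSet_Ioi fun t ht => (hpt t ht).tsum_eq] at hmain
    rw [← hmain.tsum_eq]
    refine tsum_congr fun j => ?_
    rw [integral_const_mul, hkap j]
    ring
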